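/- arXiv:math/0606143 — 3 statements merged into one kernel-verified Lean document; each statement's English description precedes it below -/
import Mathlib

section
/- Let (G,L) be a graph/list pair with nodes enumerated v_1,…,v_n, and let c* be a proper list coloring of (G,L) with c*(v_k) = i_k. For 0 ≤ k ≤ n−1 define the pair (G_k, L_k) by: G_0 = G, L_0 = L; G_k is the subgraph induced on {v_{k+1},…,v_n}; and L_k(v_l) = L(v_l) ∖ { i_r : r ≤ k and (v_l, v_r) is an edge of G } for each l > k. Then Z(G_k, L_k) > 0 for every k, the probabilities P_{G_k,L_k}(c(v_{k+1}) = i_{k+1}) are positive, and Z(G,L) = ∏_{k=0}^{n−1} P_{G_k,L_k}(c(v_{k+1}) = i_{k+1})^{−1}. -/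
open scoped Classical

/-- The set of proper list colorings of the graph/list pair `(G, L)`. -/
def properColorings {V : Type} (G : SimpleGraph V) (L : V → Finset ℕ) : Set (V → ℕ) :=
  {c | (∀ v, c v ∈ L v) ∧ ∀ u w, G.Adj u w → c u ≠ c w}

/-- `Z(G,L)`: the number of proper list colorings. -/
noncomputable def numColorings {V : Type} (G : SimpleGraph V) (L : V → Finset ℕ) : ℕ :=
  (properColorings G L).ncard

/-- `P_{G,L}(E)`: probability of the event `E` under the uniform distribution on
proper list colorings. -/
noncomputable def colorProb {V : Type} (G : SimpleGraph V) (L : V → Finset ℕ)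
    (E : Set (V → ℕ)) : ℝ :=
  ((properColorings G L ∩ E).ncard : ℝ) / (numColorings G L : ℝ)

/-- Vertex set of the graph `G_k`: the nodes `v_{k+1}, …, v_n` (`0`-indexed: indices `≥ k`). -/
abbrev Svert (n k : ℕ) : Type := {l : Fin n // k ≤ (l : ℕ)}

/-- The graph `G_k`, induced on the nodes `v_{k+1}, …, v_n`. -/
def Gk {n : ℕ} (G : SimpleGraph (Fin n)) (k : ℕ) : SimpleGraph (Svert n k) :=
  SimpleGraph.comap Subtype.val G

/-- The list vector `L_k`: from the list of each remaining node delete the colors `c*(v_r)`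
of those already-removed nodes `v_r` (`r ≤ k`, i.e. `0`-indexed `r < k`) adjacent to it. -/
noncomputable def Lk {n : ℕ} (G : SimpleGraph (Fin n)) (L : Fin n → Finset ℕ)
    (cstar : Fin n → ℕ) (k : ℕ) : Svert n k → Finset ℕ :=
  fun u => L u.1 \
    (Finset.univ.filter (fun r : Fin n => (r : ℕ) < k ∧ G.Adj u.1 r)).image cstar

/-- The marginal `P_{G_k, L_k}(c(v_{k+1}) = i_{k+1})` (with `k` `0`-indexed). -/
noncomputable def margP {n : ℕ} (G : SimpleGraph (Fin n)) (L : Fin n → Finset ℕ)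
    (cstar : Fin n → ℕ) (k : Fin n) : ℝ :=
  colorProb (Gk G (k : ℕ)) (Lk G L cstar (k : ℕ))
    {c | c ⟨k, le_refl _⟩ = cstar k}

/-! Fix the proper coloring `c`. Extending by `c` identifies the proper colorings of a pair reduced
along `c` with the proper colorings of `(G, L)` that agree with `c` on the removed nodes. So each
marginal is the ratio of two consecutive terms of the sequence whose `k`-th term counts the proper
colorings agreeing with `c` on the first `k` nodes. That sequence starts at `Z(G, L)` and ends at
`1`, and the product of the inverse ratios telescopes. -/

theorem prod_range_div_succ {K : Type*} [CommGroupWithZero K] {f : ℕ → K} (hf : ∀ i, f i ≠ 0)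
    (n : ℕ) : ∏ i ∈ Finset.range n, f i / f (i + 1) = f 0 / f n := by
  induction n with
  | zero => rw [Finset.prod_range_zero, div_self (hf 0)]
  | succ n ih => rw [Finset.prod_range_succ, ih, div_mul_div_cancel₀ (hf n)]

section Agreeing

variable {V α : Type*} {A : Set (V → α)} {c : V → α}

/-- The functions in the family `A` that agree with the reference function `c` on `S`. -/
def agreeing (A : Set (V → α)) (c : V → α) (S : Set V) : Set (V → α) :=
  {d ∈ A | Set.EqOn d c S}

theorem mem_agreeing_self (hc : c ∈ A) (S : Set V) : c ∈ agreeing A c S :=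
  ⟨hc, Set.eqOn_refl c S⟩

theorem ncard_agreeing_pos (hA : A.Finite) (hc : c ∈ A) (S : Set V) :
    0 < (agreeing A c S).ncard :=
  (Set.ncard_pos (hA.subset (Set.sep_subset _ _))).2 ⟨c, mem_agreeing_self hc S⟩

theorem agreeing_empty (A : Set (V → α)) (c : V → α) : agreeing A c ∅ = A :=
  Set.sep_eq_self_iff_mem_true.2 fun d _ => Set.eqOn_empty d c

theorem agreeing_univ (hc : c ∈ A) : agreeing A c Set.univ = {c} :=
  Set.eq_singleton_iff_unique_mem.2
    ⟨mem_agreeing_self hc _, fun _ hd => (Set.eqOn_univ _ _).1 hd.2⟩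

theorem agreeing_insert (A : Set (V → α)) (c : V → α) (v : V) (S : Set V) :
    agreeing A c (insert v S) = agreeing A c S ∩ {d | d v = c v} := by
  ext d
  simp only [agreeing, Set.insert_eq, Set.union_comm {v}, Set.mem_inter_iff, Set.mem_ofPred_eq,
    Set.eqOn_union, Set.eqOn_singleton, and_assoc]

end Agreeing

section InitialSegment

variable {n : ℕ}

/-- The nodes `v_1, …, v_k` (indices below `k`), which are removed in passing to `G_k`. -/
def firstNodes (n k : ℕ) : Set (Fin n) := {r | (r : ℕ) < k}

theorem firstNodes_zero (n : ℕ) : firstNodes n 0 = ∅ :=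
  Set.eq_empty_of_forall_notMem fun r => Nat.not_lt_zero r

theorem firstNodes_self (n : ℕ) : firstNodes n n = Set.univ :=
  Set.eq_univ_of_forall fun r => r.isLt

theorem firstNodes_succ (k : Fin n) : firstNodes n (k + 1) = insert k (firstNodes n k) := by
  ext r
  simp only [firstNodes, Set.mem_insert_iff, Set.mem_ofPred_eq, Fin.ext_iff]
  omega

theorem ncard_eq_prod_agreeing_firstNodes {α : Type*} {A : Set (Fin n → α)} {c : Fin n → α}
    (hA : A.Finite) (hc : c ∈ A) :
    (A.ncard : ℝ) = ∏ k : Fin n, ((agreeing A c (firstNodes n k)).ncard : ℝ) /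
      (agreeing A c (firstNodes n (k + 1))).ncard := by
  have hne : ∀ k, ((agreeing A c (firstNodes n k)).ncard : ℝ) ≠ 0 := fun k =>
    Nat.cast_ne_zero.2 (ncard_agreeing_pos hA hc _).ne'
  rw [Fin.prod_univ_eq_prod_range (fun k => ((agreeing A c (firstNodes n k)).ncard : ℝ) /
      (agreeing A c (firstNodes n (k + 1))).ncard), prod_range_div_succ hne, firstNodes_zero,
    agreeing_empty, firstNodes_self, agreeing_univ hc, Set.ncard_singleton, Nat.cast_one, div_one]

end InitialSegment

section Reduction

variable {V : Type} {G : SimpleGraph V} {L : V → Finset ℕ} {c : V → ℕ} {p : V → Prop}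

theorem properColorings_finite [Finite V] (G : SimpleGraph V) (L : V → Finset ℕ) :
    (properColorings G L).Finite :=
  (Set.Finite.pi' fun v => (L v).finite_toSet).subset fun _ hc => hc.1

/-- The lists left on the nodes satisfying `p` once every other node `r` has received the color
`c r`. -/
noncomputable def reducedList (G : SimpleGraph V) (L : V → Finset ℕ) (c : V → ℕ) (p : V → Prop) :
    Subtype p → Finset ℕ :=
  fun u => {i ∈ L u | ∀ r, ¬p r → G.Adj u r → i ≠ c r}

theorem extend_mem_properColorings (hc : c ∈ properColorings G L) {d : Subtype p → ℕ}
    (hd : d ∈ properColorings (G.comap Subtype.val) (reducedList G L c p)) :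
    Function.extend Subtype.val d c ∈ properColorings G L := by
  obtain ⟨hd_list, hd_adj⟩ := hd
  have hd_mem : ∀ u : Subtype p, d u ∈ L u := fun u => (Finset.mem_filter.1 (hd_list u)).1
  have hd_removed : ∀ (u : Subtype p) r, ¬p r → G.Adj u r → d u ≠ c r := fun u =>
    (Finset.mem_filter.1 (hd_list u)).2
  refine ⟨fun v => ?_, fun v w hvw => ?_⟩
  · by_cases hv : p v
    · rw [Function.extend_val_apply hv]
      exact hd_mem ⟨v, hv⟩
    · rw [Function.extend_val_apply' hv]
      exact hc.1 v
  · by_cases hv : p v <;> by_cases hw : p w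
    · rw [Function.extend_val_apply hv, Function.extend_val_apply hw]
      exact hd_adj ⟨v, hv⟩ ⟨w, hw⟩ hvw
    · rw [Function.extend_val_apply hv, Function.extend_val_apply' hw]
      exact hd_removed ⟨v, hv⟩ w hw hvw
    · rw [Function.extend_val_apply' hv, Function.extend_val_apply hw]
      exact (hd_removed ⟨w, hw⟩ v hv hvw.symm).symm
    · rw [Function.extend_val_apply' hv, Function.extend_val_apply' hw]
      exact hc.2 v w hvw

theorem restrict_mem_properColorings {e : V → ℕ}
    (he : e ∈ agreeing (properColorings G L) c {v | ¬p v}) :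
    (fun u : Subtype p => e u) ∈ properColorings (G.comap Subtype.val) (reducedList G L c p) := by
  obtain ⟨⟨he_list, he_adj⟩, he_agree⟩ := he
  refine ⟨fun u => Finset.mem_filter.2 ⟨he_list u, fun r hr hur => ?_⟩, fun u w => he_adj u w⟩
  rw [← he_agree hr]
  exact he_adj u r hur

theorem image_extend_properColorings (hc : c ∈ properColorings G L) (p : V → Prop) :
    (fun d => Function.extend Subtype.val d c) ''
        properColorings (G.comap Subtype.val) (reducedList G L c p) =
      agreeing (properColorings G L) c {v | ¬p v} := by
  apply Set.Subset.antisymm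
  · rintro _ ⟨d, hd, rfl⟩
    exact ⟨extend_mem_properColorings hc hd, fun v hv => Function.extend_val_apply' hv⟩
  · intro e he
    refine ⟨fun u => e u, restrict_mem_properColorings he, funext fun v => ?_⟩
    by_cases hv : p v
    · exact Function.extend_val_apply hv
    · exact (Function.extend_val_apply' hv).trans (he.2 hv).symm

theorem numColorings_reducedList (hc : c ∈ properColorings G L) (p : V → Prop) :
    numColorings (G.comap Subtype.val) (reducedList G L c p) =
      (agreeing (properColorings G L) c {v | ¬p v}).ncard := by
  rw [← image_extend_properColorings hc p,
    Set.ncard_image_of_injective _ (Function.extend_injective Subtype.val_injective c),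
    numColorings]

theorem colorProb_reducedList (hc : c ∈ properColorings G L) (E : Set (V → ℕ)) :
    colorProb (G.comap Subtype.val) (reducedList G L c p)
        ((fun d => Function.extend Subtype.val d c) ⁻¹' E) =
      ((agreeing (properColorings G L) c {v | ¬p v} ∩ E).ncard : ℝ) /
        (agreeing (properColorings G L) c {v | ¬p v}).ncard := by
  rw [colorProb, numColorings_reducedList hc, ← image_extend_properColorings hc p,
    ← Set.image_inter_preimage,
    Set.ncard_image_of_injective (_ ∩ _) (Function.extend_injective Subtype.val_injective c),
    Set.ncard_image_of_injective _ (Function.extend_injective Subtype.val_injective c)]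

end Reduction

section Cavity

variable {n : ℕ} {G : SimpleGraph (Fin n)} {L : Fin n → Finset ℕ} {c : Fin n → ℕ}

theorem Lk_eq_reducedList (G : SimpleGraph (Fin n)) (L : Fin n → Finset ℕ) (c : Fin n → ℕ)
    (k : ℕ) : Lk G L c k = reducedList G L c (fun l => k ≤ (l : ℕ)) := by
  ext u i
  simp only [Lk, reducedList, Finset.mem_sdiff, Finset.mem_image, Finset.mem_filter,
    Finset.mem_univ, true_and, not_exists, not_and, and_imp, not_le, ne_comm (a := i), ne_eq]

theorem setOf_not_le_eq_firstNodes (n k : ℕ) :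
    {l : Fin n | ¬k ≤ (l : ℕ)} = firstNodes n k :=
  Set.ext fun _ => not_le

theorem numColorings_Gk (hc : c ∈ properColorings G L) (k : ℕ) :
    numColorings (Gk G k) (Lk G L c k) =
      (agreeing (properColorings G L) c (firstNodes n k)).ncard := by
  rw [Gk, Lk_eq_reducedList, numColorings_reducedList hc, setOf_not_le_eq_firstNodes]

theorem margP_eq_div (hc : c ∈ properColorings G L) (k : Fin n) :
    margP G L c k = ((agreeing (properColorings G L) c (firstNodes n (k + 1))).ncard : ℝ) /
      (agreeing (properColorings G L) c (firstNodes n k)).ncard := by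
  have hevent : {d : Svert n k → ℕ | d ⟨k, le_refl _⟩ = c k} =
      (fun d => Function.extend Subtype.val d c) ⁻¹' {e | e k = c k} := by
    ext d
    rw [Set.mem_preimage, Set.mem_ofPred_eq, Set.mem_ofPred_eq,
      Function.extend_val_apply (p := fun l : Fin n => (k : ℕ) ≤ l) (le_refl _)]
  rw [margP, Gk, Lk_eq_reducedList, hevent, colorProb_reducedList hc, setOf_not_le_eq_firstNodes,
    firstNodes_succ, agreeing_insert]

end Cavity

/-- The cavity identity: given a proper list coloring `c*`, all the reduced pairs
`(G_k, L_k)` have colorings, the marginals `P_{G_k,L_k}(c(v_{k+1}) = i_{k+1})` are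
positive, and `Z(G,L) = ∏_k P_{G_k,L_k}(c(v_{k+1}) = i_{k+1})⁻¹`. -/
theorem stmt2 (n : ℕ) (G : SimpleGraph (Fin n)) (L : Fin n → Finset ℕ)
    (cstar : Fin n → ℕ) (hc : cstar ∈ properColorings G L) :
    (∀ k : ℕ, k < n → 0 < numColorings (Gk G k) (Lk G L cstar k)) ∧
    (∀ k : Fin n, 0 < margP G L cstar k) ∧
    (numColorings G L : ℝ) = ∏ k : Fin n, (margP G L cstar k)⁻¹ := by
  have hfin := properColorings_finite G L
  refine ⟨fun k _ => ?_, fun k => ?_, ?_⟩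
  · rw [numColorings_Gk hc]
    exact ncard_agreeing_pos hfin hc _
  · rw [margP_eq_div hc]
    exact div_pos (Nat.cast_pos.2 (ncard_agreeing_pos hfin hc _))
      (Nat.cast_pos.2 (ncard_agreeing_pos hfin hc _))
  · simp only [margP_eq_div hc, inv_div]
    exact ncard_eq_prod_agreeing_firstNodes hfin hc
end

section
/- Let α ≥ 1 and β ∈ ℝ, and let (G,L) be a graph/list pair satisfying |L(u)| ≥ α·Δ_G(u) + β for every node u, where Δ_G(u) is the degree of u in G. Let v be a node of G with neighbors v_1,…,v_m listed in a fixed order. Then for every 1 ≤ k ≤ m and every color i, the reduced pair (G_v, L_{k,i}) satisfies |L_{k,i}(u)| ≥ α·Δ_{G_v}(u) + β for every node u of G_v, where Δ_{G_v}(u) is the degree of u in G_v. -/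
open scoped Classical

/-- The degree of a node `v` in `G`. -/
noncomputable def deg {V : Type} (G : SimpleGraph V) (v : V) : ℕ :=
  (G.neighborSet v).ncard

/-- The graph `G_v`: `G` with the node `v` deleted. -/
def Gdel {V : Type} (G : SimpleGraph V) (v : V) : SimpleGraph {u : V // u ≠ v} :=
  SimpleGraph.comap Subtype.val G

/-- The list vector `L_{k,i}`: the color `i` is deleted from the lists of the neighbors
`v_r` of `v` with `1 ≤ r < k` (here `w` lists the neighbors in a fixed order, `0`-indexed),
all other lists are unchanged. -/
noncomputable def Lki {V : Type} (L : V → Finset ℕ) (v : V) {m : ℕ} (w : Fin m → V)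
    (k : ℕ) (i : ℕ) : {u : V // u ≠ v} → Finset ℕ :=
  fun u => if ∃ r : Fin m, (r : ℕ) + 1 < k ∧ w r = u.1 then L u.1 \ {i} else L u.1

/-!
A node that is not adjacent to `v` keeps both its list and its degree. A neighbor of `v` loses at
most one color, while its degree drops by exactly one, so the lower bound required of its list drops
by `α ≥ 1`.
-/

section Degree

variable {V : Type} (G : SimpleGraph V) {v : V} (u : {x : V // x ≠ v})

theorem image_val_neighborSet_Gdel :
    Subtype.val '' (Gdel G v).neighborSet u = G.neighborSet u \ {v} := by
  ext x
  constructor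
  · rintro ⟨y, hy, rfl⟩
    exact ⟨hy, y.2⟩
  · rintro ⟨hadj, hne⟩
    exact ⟨⟨x, hne⟩, hadj, rfl⟩

theorem deg_Gdel : deg (Gdel G v) u = (G.neighborSet u \ {v}).ncard := by
  rw [← image_val_neighborSet_Gdel, Set.ncard_image_of_injective _ Subtype.val_injective, deg]

variable {G u}

theorem deg_Gdel_add_one_of_adj (hfin : (G.neighborSet u).Finite) (hadj : G.Adj v u) :
    deg (Gdel G v) u + 1 = deg G u := by
  rw [deg_Gdel]
  exact Set.ncard_sdiff_singleton_add_one hadj.symm hfin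

theorem deg_Gdel_of_not_adj (hadj : ¬G.Adj v u) : deg (Gdel G v) u = deg G u := by
  rw [deg_Gdel, Set.sdiff_singleton_eq_self fun h => hadj h.symm, deg]

end Degree

section Lists

variable {V : Type} (L : V → Finset ℕ) {v : V} {m : ℕ} {w : Fin m → V} (k i : ℕ)
  {u : {x : V // x ≠ v}}

theorem Lki_of_forall_ne (hu : ∀ r, w r ≠ u) : Lki L v w k i u = L u :=
  if_neg fun ⟨r, _, hr⟩ => hu r hr

variable (w u) in
theorem card_le_card_Lki_add_one : (L u).card ≤ (Lki L v w k i u).card + 1 := by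
  unfold Lki
  split_ifs
  · rw [Finset.sdiff_singleton_eq_erase]
    exact tsub_le_iff_right.1 Finset.pred_card_le_card_erase
  · exact Nat.le_succ _

end Lists

theorem stmt3_general {V : Type} {R : Type*} [Ring R] [PartialOrder R] [IsOrderedRing R]
    {α β : R} (hα : 1 ≤ α) {G : SimpleGraph V} (hfin : ∀ u, (G.neighborSet u).Finite)
    {L : V → Finset ℕ} (hL : ∀ u, α * (deg G u : R) + β ≤ ((L u).card : R))
    {v : V} {m : ℕ} {w : Fin m → V} (hw : ∀ r, G.Adj v (w r)) (k i : ℕ)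
    (u : {x : V // x ≠ v}) :
    α * (deg (Gdel G v) u : R) + β ≤ ((Lki L v w k i u).card : R) := by
  by_cases hadj : G.Adj v u
  · have hcard : ((L u).card : R) ≤ (Lki L v w k i u).card + 1 :=
      mod_cast Nat.mono_cast (card_le_card_Lki_add_one L w k i u)
    refine le_of_add_le_add_right (a := 1) ?_
    calc α * (deg (Gdel G v) u : R) + β + 1
        ≤ α * (deg (Gdel G v) u : R) + β + α := by gcongr
      _ = α * (deg G u : R) + β := by
        rw [← deg_Gdel_add_one_of_adj (hfin u) hadj, Nat.cast_succ, mul_add_one, add_right_comm]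
      _ ≤ (L u).card := hL u
      _ ≤ (Lki L v w k i u).card + 1 := hcard
  · have hu : ∀ r, w r ≠ u := fun r hr => hadj (hr ▸ hw r)
    rw [deg_Gdel_of_not_adj hadj, Lki_of_forall_ne L k i hu]
    exact hL u

/-- If `(G, L)` satisfies `|L(u)| ≥ α·Δ_G(u) + β` (with `α ≥ 1`) then every reduced pair
`(G_v, L_{k,i})`, `1 ≤ k ≤ m`, satisfies `|L_{k,i}(u)| ≥ α·Δ_{G_v}(u) + β`. -/
theorem stmt3 {V : Type} [Fintype V] (α β : ℝ) (hα : 1 ≤ α)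
    (G : SimpleGraph V) (L : V → Finset ℕ)
    (hL : ∀ u, α * (deg G u : ℝ) + β ≤ ((L u).card : ℝ))
    (v : V) (m : ℕ) (w : Fin m → V) (hinj : Function.Injective w)
    (hnbr : ∀ u, G.Adj v u ↔ ∃ r, w r = u)
    (k : ℕ) (hk1 : 1 ≤ k) (hkm : k ≤ m) (i : ℕ) :
    ∀ u : {x : V // x ≠ v},
      α * (deg (Gdel G v) u : ℝ) + β ≤ ((Lki L v w k i u).card : ℝ) :=
  stmt3_general hα (fun _ => Set.toFinite _) hL (fun r => (hnbr (w r)).2 ⟨r, rfl⟩) k i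
end

section
/- Let X be a finite nonempty set, m ≥ 1 an integer, x_0 ∈ X, φ : X → ℝ_{>0}, and f_k : X × X → ℝ_{>0} for 1 ≤ k ≤ m. Let f_min and f_max be the minimum and maximum of f_k(x,y) over all k, x, y, and set c_f = f_max/f_min. Let I = ⋃_{k=1}^{m} X^k be the set of all sequences (x_1,…,x_k) of elements of X of length between 1 and m, and for w : I → ℝ define G(w) = log[ φ(x_0) ∑_{(x_1,…,x_m)∈X^m} ∏_{k=1}^{m} f_k(x_0, x_k)·exp(w_{(x_1,…,x_k)}) ] − log[ ∑_{x∈X} φ(x) ∑_{(x_1,…,x_m)∈X^m} ∏_{k=1}^{m} f_k(x, x_k)·exp(w_{(x_1,…,x_k)}) ]. Then for all w, w' : I → ℝ: |G(w) − G(w')| ≤ (c_f^m − c_f^{−m}) · m · |X|^m · max_{ι∈I} |w_ι − w'_ι|. -/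
/-- The index set `I = ⋃_{k=1}^m X^k`: sequences `(x_1, …, x_k)` of elements of `𝒳`
of length between `1` and `m` (a sequence of length `k+1` for each `k : Fin m`). -/
abbrev SeqIdx (m : ℕ) (𝒳 : Type) : Type := Σ k : Fin m, Fin ((k : ℕ) + 1) → 𝒳

/-- The function `G(w)`: the logarithm of the MRF recursion map,
`G(w) = log[ φ(x_0) ∑_{(x_1,…,x_m)} ∏_k f_k(x_0,x_k)·e^{w_{(x_1,…,x_k)}} ]
      − log[ ∑_x φ(x) ∑_{(x_1,…,x_m)} ∏_k f_k(x,x_k)·e^{w_{(x_1,…,x_k)}} ]`. -/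
noncomputable def Gfun {𝒳 : Type} [Fintype 𝒳] (m : ℕ) (x0 : 𝒳) (φ : 𝒳 → ℝ)
    (f : Fin m → 𝒳 → 𝒳 → ℝ) (w : SeqIdx m 𝒳 → ℝ) : ℝ :=
  Real.log (φ x0 * ∑ xv : Fin m → 𝒳, ∏ k : Fin m,
      (f k x0 (xv k) * Real.exp (w ⟨k, fun r => xv (Fin.castLE k.isLt r)⟩)))
    - Real.log (∑ x : 𝒳, φ x * ∑ xv : Fin m → 𝒳, ∏ k : Fin m,
      (f k x (xv k) * Real.exp (w ⟨k, fun r => xv (Fin.castLE k.isLt r)⟩)))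

/-!
Write `e^{s(x_1,…,x_m)}` for the product of the exponentials along `(x_1,…,x_m)`, so that `s` is the
sum of `w` over the prefixes. Up to a constant, `G` is the difference of two functions
`log ∑ A_i e^{s_i}` with the same exponents and different coefficients, and the derivative of such a
function in a direction `d` is the mean of `d` under the probability weights proportional to
`A_i e^{s_i}`. If the coefficients vary at most by a factor `c`, these weights lie within a factor
`c` of those proportional to `e^{s_i}`, whatever the overall size of the `A_i`. Hence the
two means differ by at most `(c - c⁻¹) ‖d‖`, and the mean value inequality concludes: here
`c = c_f ^ m`, and `s` changes by at most `m` times the largest change of `w`.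
-/

open Finset

/-- The function `A` varies at most by the factor `c`. Unlike two-sided bounds on `A`, this is
unaffected by rescaling `A`, so coefficients of different overall size can be compared. -/
def HasRatioBound {ι : Type*} (c : ℝ) (A : ι → ℝ) : Prop :=
  ∀ i j, A i ≤ c * A j

namespace HasRatioBound

variable {ι κ : Type*} {c : ℝ} {A B e : ι → ℝ}

lemma of_mem_Icc {a b : ℝ} (ha : 0 < a) (hA : ∀ i, A i ∈ Set.Icc a b) :
    HasRatioBound (b / a) A := fun i j ↦ by
  have hb : 0 ≤ b := ha.le.trans ((hA i).1.trans (hA i).2)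
  calc
    A i ≤ b := (hA i).2
    _ = b / a * a := (div_mul_cancel₀ b ha.ne').symm
    _ ≤ b / a * A j := mul_le_mul_of_nonneg_left (hA j).1 (div_nonneg hb ha.le)

lemma fun_prod {t : Finset κ} {c : κ → ℝ} {A : κ → ι → ℝ} (hA₀ : ∀ k ∈ t, ∀ i, 0 ≤ A k i)
    (hA : ∀ k ∈ t, HasRatioBound (c k) (A k)) :
    HasRatioBound (∏ k ∈ t, c k) (fun i ↦ ∏ k ∈ t, A k i) := fun i j ↦ by
  rw [← prod_mul_distrib]
  exact prod_le_prod (fun k hk ↦ hA₀ k hk i) fun k hk ↦ hA k hk i j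

lemma fun_sum_mul {t : Finset κ} {a : κ → ℝ} {A : κ → ι → ℝ} (ha : ∀ k ∈ t, 0 ≤ a k)
    (hA : ∀ k ∈ t, HasRatioBound c (A k)) :
    HasRatioBound c (fun i ↦ ∑ k ∈ t, a k * A k i) := fun i j ↦ by
  rw [mul_sum]
  refine sum_le_sum fun k hk ↦ ?_
  rw [mul_left_comm]
  exact mul_le_mul_of_nonneg_left (hA k hk i j) (ha k hk)

lemma one_le [Nonempty ι] (hA₀ : ∀ i, 0 < A i) (hA : HasRatioBound c A) : 1 ≤ c :=
  have i := Classical.arbitrary ι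
  le_of_mul_le_mul_right ((one_mul (A i)).trans_le (hA i i)) (hA₀ i)

variable [Fintype ι]

lemma normalized_mul_mem_Icc (hA₀ : ∀ i, 0 < A i) (hA : HasRatioBound c A) (he : ∀ i, 0 < e i)
    (i : ι) :
    A i * e i / ∑ j, A j * e j ∈ Set.Icc (c⁻¹ * (e i / ∑ j, e j)) (c * (e i / ∑ j, e j)) := by
  have : Nonempty ι := ⟨i⟩
  have hc : 0 < c := one_pos.trans_le (hA.one_le hA₀)
  have he_sum : 0 < ∑ j, e j := sum_pos (fun j _ ↦ he j) univ_nonempty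
  have hAe_sum : 0 < ∑ j, A j * e j := sum_pos (fun j _ ↦ mul_pos (hA₀ j) (he j)) univ_nonempty
  have h_upper : A i * ∑ j, e j ≤ c * ∑ j, A j * e j := by
    simp only [mul_sum, ← mul_assoc]
    exact sum_le_sum fun j _ ↦ mul_le_mul_of_nonneg_right (hA i j) (he j).le
  have h_lower : ∑ j, A j * e j ≤ c * A i * ∑ j, e j := by
    rw [mul_sum]
    exact sum_le_sum fun j _ ↦ mul_le_mul_of_nonneg_right (hA j i) (he j).le
  constructor
  · rw [inv_mul_le_iff₀ hc, ← mul_div_assoc, div_le_div_iff₀ he_sum hAe_sum]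
    linarith [mul_le_mul_of_nonneg_left h_lower (he i).le]
  · rw [← mul_div_assoc, div_le_div_iff₀ hAe_sum he_sum]
    linarith [mul_le_mul_of_nonneg_left h_upper (he i).le]

lemma norm_centerMass_sub_centerMass_le [Nonempty ι] {E : Type*} [SeminormedAddCommGroup E]
    [NormedSpace ℝ E] (hA₀ : ∀ i, 0 < A i) (hA : HasRatioBound c A) (hB₀ : ∀ i, 0 < B i)
    (hB : HasRatioBound c B) (he : ∀ i, 0 < e i) (d : ι → E) :
    ‖univ.centerMass (A * e) d - univ.centerMass (B * e) d‖ ≤ (c - c⁻¹) * ‖d‖ := by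
  set p : ι → ℝ := fun i ↦ A i * e i / ∑ j, A j * e j
  set q : ι → ℝ := fun i ↦ B i * e i / ∑ j, B j * e j
  set r : ι → ℝ := fun i ↦ e i / ∑ j, e j
  have hr : ∑ i, r i = 1 := by
    rw [← sum_div, div_self (sum_pos (fun j _ ↦ he j) univ_nonempty).ne']
  have hpq (i : ι) : |p i - q i| ≤ (c - c⁻¹) * r i := by
    have hp := hA.normalized_mul_mem_Icc hA₀ he i
    have hq := hB.normalized_mul_mem_Icc hB₀ he i
    rw [sub_mul]
    exact abs_sub_le_of_le_of_le hp.1 hp.2 hq.1 hq.2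
  calc
    ‖univ.centerMass (A * e) d - univ.centerMass (B * e) d‖ = ‖∑ i, (p i - q i) • d i‖ := by
      simp only [centerMass, Pi.mul_apply, smul_sum, smul_smul, sub_smul, sum_sub_distrib, p, q,
        div_eq_inv_mul]
    _ ≤ ∑ i, |p i - q i| * ‖d i‖ := by
      simpa only [norm_smul, Real.norm_eq_abs] using norm_sum_le univ fun i ↦ (p i - q i) • d i
    _ ≤ ∑ i, (c - c⁻¹) * r i * ‖d‖ := sum_le_sum fun i _ ↦
      mul_le_mul (hpq i) (norm_le_pi_norm d i) (norm_nonneg _) ((abs_nonneg _).trans (hpq i))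
    _ = (c - c⁻¹) * ‖d‖ := by rw [← sum_mul, ← mul_sum, hr, mul_one]

end HasRatioBound

lemma pi_norm_eq_iSup_norm {ι : Type*} [Fintype ι] {E : ι → Type*}
    [∀ i, SeminormedAddCommGroup (E i)] (v : ∀ i, E i) : ‖v‖ = ⨆ i, ‖v i‖ :=
  le_antisymm
    ((pi_norm_le_iff_of_nonneg (Real.iSup_nonneg fun i ↦ norm_nonneg (v i))).2
      (le_ciSup (Set.finite_range fun i ↦ ‖v i‖).bddAbove))
    (Real.iSup_le (norm_le_pi_norm v) (norm_nonneg v))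

section LogSumExp

variable {ι : Type*} [Fintype ι]

/-- The log-sum-exp function `s ↦ log ∑ i, A i * exp (s i)` with coefficients `A`; the function `G`
is, up to a constant, a difference of two of these. -/
noncomputable def logSumExp (A s : ι → ℝ) : ℝ :=
  Real.log (∑ i, A i * Real.exp (s i))

variable [Nonempty ι] {A B : ι → ℝ}

lemma hasDerivAt_logSumExp (hA₀ : ∀ i, 0 < A i) (s d : ι → ℝ) (t : ℝ) :
    HasDerivAt (fun t : ℝ ↦ logSumExp A (s + t • d))
      (univ.centerMass (A * fun i ↦ Real.exp ((s + t • d) i)) d) t := by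
  have h_line (i : ι) : HasDerivAt (fun t : ℝ ↦ (s + t • d) i) (d i) t := by
    simpa using ((hasDerivAt_id t).mul_const (d i)).const_add (s i)
  have h_sum := HasDerivAt.fun_sum (u := univ) fun i _ ↦ ((h_line i).exp.const_mul (A i))
  have h_pos : 0 < ∑ i, A i * Real.exp ((s + t • d) i) :=
    sum_pos (fun i _ ↦ mul_pos (hA₀ i) (Real.exp_pos _)) univ_nonempty
  refine (h_sum.log h_pos.ne').congr_deriv ?_
  simp only [centerMass, Pi.mul_apply, smul_eq_mul, div_eq_inv_mul, mul_assoc]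

lemma HasRatioBound.abs_logSumExp_sub_sub_le {c : ℝ} (hA₀ : ∀ i, 0 < A i)
    (hA : HasRatioBound c A) (hB₀ : ∀ i, 0 < B i) (hB : HasRatioBound c B) (s s' : ι → ℝ) :
    |(logSumExp A s - logSumExp B s) - (logSumExp A s' - logSumExp B s')|
      ≤ (c - c⁻¹) * ‖s - s'‖ := by
  have h := norm_image_sub_le_of_norm_deriv_le_segment_01'
    (fun t _ ↦ ((hasDerivAt_logSumExp hA₀ s' (s - s') t).sub
      (hasDerivAt_logSumExp hB₀ s' (s - s') t)).hasDerivWithinAt)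
    (fun t _ ↦ hA.norm_centerMass_sub_centerMass_le hA₀ hB₀ hB (fun i ↦ Real.exp_pos _) (s - s'))
  simpa using h

end LogSumExp

section Recursion

variable {𝒳 : Type} {m : ℕ}

/-- The exponent `w (x_1) + w (x_1, x_2) + ⋯ + w (x_1, …, x_m)` contributed to the recursion map by
the sequence `(x_1, …, x_m)`. -/
def prefixSum (w : SeqIdx m 𝒳 → ℝ) (xv : Fin m → 𝒳) : ℝ :=
  ∑ k : Fin m, w ⟨k, fun r ↦ xv (Fin.castLE k.isLt r)⟩

/-- The coefficient `∏ k, f_k (x, x_k)` of the sequence `(x_1, …, x_m)` when the node has value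
`x`. -/
def edgeWeight (f : Fin m → 𝒳 → 𝒳 → ℝ) (x : 𝒳) (xv : Fin m → 𝒳) : ℝ :=
  ∏ k, f k x (xv k)

lemma edgeWeight_pos {f : Fin m → 𝒳 → 𝒳 → ℝ} (hf₀ : ∀ k x y, 0 < f k x y) (x : 𝒳)
    (xv : Fin m → 𝒳) : 0 < edgeWeight f x xv :=
  prod_pos fun k _ ↦ hf₀ k x (xv k)

lemma hasRatioBound_edgeWeight {f : Fin m → 𝒳 → 𝒳 → ℝ} {c : ℝ} (hf₀ : ∀ k x y, 0 ≤ f k x y)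
    (hf : ∀ k x, HasRatioBound c (f k x)) (x : 𝒳) : HasRatioBound (c ^ m) (edgeWeight f x) := by
  have h := HasRatioBound.fun_prod (t := univ) (c := fun _ ↦ c)
    (fun k _ (xv : Fin m → 𝒳) ↦ hf₀ k x (xv k)) fun k _ xv xv' ↦ hf k x (xv k) (xv' k)
  rwa [prod_const, card_univ, Fintype.card_fin] at h

variable [Fintype 𝒳]

lemma norm_prefixSum_sub_le (w w' : SeqIdx m 𝒳 → ℝ) :
    ‖prefixSum w - prefixSum w'‖ ≤ m * ‖w - w'‖ := by
  refine (pi_norm_le_iff_of_nonneg (by positivity)).2 fun xv ↦ ?_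
  rw [Pi.sub_apply, prefixSum, prefixSum, ← sum_sub_distrib]
  simpa using norm_sum_le_of_le univ fun k _ ↦
    norm_le_pi_norm (w - w') ⟨k, fun r ↦ xv (Fin.castLE k.isLt r)⟩

lemma sum_prod_mul_exp_eq (f : Fin m → 𝒳 → 𝒳 → ℝ) (w : SeqIdx m 𝒳 → ℝ) (x : 𝒳) :
    ∑ xv : Fin m → 𝒳, ∏ k : Fin m,
        (f k x (xv k) * Real.exp (w ⟨k, fun r ↦ xv (Fin.castLE k.isLt r)⟩))
      = ∑ xv, edgeWeight f x xv * Real.exp (prefixSum w xv) := by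
  simp only [prod_mul_distrib, ← Real.exp_sum, edgeWeight, prefixSum]

lemma Gfun_eq_logSumExp_sub {x0 : 𝒳} {φ : 𝒳 → ℝ} (hφ₀ : φ x0 ≠ 0) {f : Fin m → 𝒳 → 𝒳 → ℝ}
    (hf₀ : ∀ k x y, 0 < f k x y) (w : SeqIdx m 𝒳 → ℝ) :
    Gfun m x0 φ f w = Real.log (φ x0) + (logSumExp (edgeWeight f x0) (prefixSum w)
      - logSumExp (fun xv ↦ ∑ x, φ x * edgeWeight f x xv) (prefixSum w)) := by
  have : Nonempty 𝒳 := ⟨x0⟩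
  have h_pos : 0 < ∑ xv, edgeWeight f x0 xv * Real.exp (prefixSum w xv) :=
    sum_pos (fun xv _ ↦ mul_pos (edgeWeight_pos hf₀ x0 xv) (Real.exp_pos _)) univ_nonempty
  have h_swap : ∑ x, φ x * ∑ xv, edgeWeight f x xv * Real.exp (prefixSum w xv)
      = ∑ xv, (∑ x, φ x * edgeWeight f x xv) * Real.exp (prefixSum w xv) := by
    simp only [mul_sum, sum_mul, ← mul_assoc]
    exact sum_comm
  simp only [Gfun, sum_prod_mul_exp_eq]
  rw [Real.log_mul hφ₀ h_pos.ne', h_swap, add_sub_assoc, logSumExp, logSumExp]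

theorem stmt19_general (x0 : 𝒳) {φ : 𝒳 → ℝ} (hφ : ∀ x, 0 ≤ φ x) (hφ₀ : 0 < φ x0)
    {f : Fin m → 𝒳 → 𝒳 → ℝ} {c : ℝ} (hf₀ : ∀ k x y, 0 < f k x y)
    (hf : ∀ k x, HasRatioBound c (f k x)) (w w' : SeqIdx m 𝒳 → ℝ) :
    |Gfun m x0 φ f w - Gfun m x0 φ f w'| ≤ (c ^ m - (c ^ m)⁻¹) * m * ‖w - w'‖ := by
  have : Nonempty 𝒳 := ⟨x0⟩
  set A := edgeWeight f x0
  set B := fun xv ↦ ∑ x, φ x * edgeWeight f x xv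
  have hA₀ : ∀ xv, 0 < A xv := edgeWeight_pos hf₀ x0
  have hB₀ (xv : Fin m → 𝒳) : 0 < B xv :=
    sum_pos' (fun x _ ↦ mul_nonneg (hφ x) (edgeWeight_pos hf₀ x xv).le)
      ⟨x0, mem_univ x0, mul_pos hφ₀ (edgeWeight_pos hf₀ x0 xv)⟩
  have h_edge := hasRatioBound_edgeWeight (fun k x y ↦ (hf₀ k x y).le) hf
  have hA : HasRatioBound (c ^ m) A := h_edge x0
  have hB : HasRatioBound (c ^ m) B := .fun_sum_mul (fun x _ ↦ hφ x) fun x _ ↦ h_edge x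
  have hc : 1 ≤ c ^ m := hA.one_le hA₀
  rw [Gfun_eq_logSumExp_sub hφ₀.ne' hf₀, Gfun_eq_logSumExp_sub hφ₀.ne' hf₀,
    add_sub_add_left_eq_sub, mul_assoc]
  exact (hA.abs_logSumExp_sub_sub_le hA₀ hB₀ hB _ _).trans <|
    mul_le_mul_of_nonneg_left (norm_prefixSum_sub_le w w')
      (sub_nonneg.2 ((inv_le_one_of_one_le₀ hc).trans hc))

end Recursion

/-- The Lipschitz estimate for the logarithmic MRF recursion map: with positive
`φ` and `f_k(x,y) ∈ [f_min, f_max]`, `c_f = f_max/f_min`,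
`|G(w) − G(w')| ≤ (c_f^m − c_f^{−m}) · m · |𝒳|^m · max_ι |w_ι − w'_ι|`. -/
theorem stmt19 {𝒳 : Type} [Fintype 𝒳] [Nonempty 𝒳] (m : ℕ) (hm : 1 ≤ m)
    (x0 : 𝒳) (φ : 𝒳 → ℝ) (hφ : ∀ x, 0 < φ x)
    (f : Fin m → 𝒳 → 𝒳 → ℝ) (fmin fmax : ℝ) (hfmin : 0 < fmin)
    (hf : ∀ k x y, f k x y ∈ Set.Icc fmin fmax)
    (w w' : SeqIdx m 𝒳 → ℝ) :
    |Gfun m x0 φ f w - Gfun m x0 φ f w'|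
      ≤ ((fmax / fmin) ^ m - (fmin / fmax) ^ m) * (m : ℝ) * (Fintype.card 𝒳 : ℝ) ^ m *
          ⨆ ι : SeqIdx m 𝒳, |w ι - w' ι| := by
  have h_general := stmt19_general x0 (fun x ↦ (hφ x).le) (hφ x0)
    (fun k x y ↦ hfmin.trans_le (hf k x y).1) (fun k x ↦ .of_mem_Icc hfmin (hf k x)) w w'
  have h_card : (1 : ℝ) ≤ (Fintype.card 𝒳 : ℝ) ^ m :=
    one_le_pow₀ (Nat.one_le_cast.2 Fintype.card_pos)
  rw [← inv_pow, inv_div, pi_norm_eq_iSup_norm] at h_general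
  rw [mul_right_comm]
  exact h_general.trans (le_mul_of_one_le_right ((abs_nonneg _).trans h_general) h_card)
end
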